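/- Let K be a field complete with respect to a nontrivial nonarchimedean absolute value, with ring of integers O_K, and let π ∈ O_K be a nonzero nonunit. Let R → S be a homomorphism of O_K-algebras such that π is a nonzerodivisor on both R and S, and suppose R is π-adically complete (R → lim_n R/π^n R is bijective). Then R → S is a universal descent morphism if and only if R → Ŝ is a universal descent morphism, where Ŝ = lim_n S/π^n S is the π-adic completion of S. -/

import Mathlib

open CategoryTheory CategoryTheory.Pretriangulated

universe u

instance restrictScalarsAdditive {R S : Type u} [CommRing R] [CommRing S] (f : R →+* S) :
    (ModuleCat.restrictScalars.{u} f).Additive where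
  map_add := rfl

/-- `f : R →+* S` is a universal descent morphism if the smallest strictly full triangulated
subcategory of `D(R)` closed under direct summands and containing all restrictions of scalars
of objects of `D(S)` is all of `D(R)`. -/
def IsUniversalDescent {R S : Type u} [CommRing R] [CommRing S] (f : R →+* S) : Prop :=
  letI := HasDerivedCategory.standard (ModuleCat.{u} R)
  ∀ P : DerivedCategory (ModuleCat.{u} R) → Prop,
    (∀ X Y : DerivedCategory (ModuleCat.{u} R), (X ≅ Y) → P X → P Y) →
    (∀ X, P X → P (X⟦(1 : ℤ)⟧)) →
    (∀ X, P X → P (X⟦(-1 : ℤ)⟧)) →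
    (∀ T : Triangle (DerivedCategory (ModuleCat.{u} R)),
      (T ∈ distTriang (DerivedCategory (ModuleCat.{u} R))) →
      P T.obj₁ → P T.obj₂ → P T.obj₃) →
    (∀ (X Y : DerivedCategory (ModuleCat.{u} R)) (i : X ⟶ Y) (r : Y ⟶ X),
      i ≫ r = 𝟙 X → P Y → P X) →
    (∀ K : CochainComplex (ModuleCat.{u} S) ℤ,
      P (DerivedCategory.Q.obj
        (((ModuleCat.restrictScalars.{u} f).mapHomologicalComplex (ComplexShape.up ℤ)).obj K))) →
    ∀ X, P X



open IsUltrametricDist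

/-- The ring of integers `O_K = {x : K | ‖x‖ ≤ 1}` of a nonarchimedean normed field. -/
def ringOfIntegers (K : Type u) [NontriviallyNormedField K] [IsUltrametricDist K] :
    Subring K where
  carrier := {x : K | ‖x‖ ≤ 1}
  one_mem' := by simp
  mul_mem' {a b} ha hb := by
    simpa [norm_mul] using mul_le_one₀ ha (norm_nonneg b) hb
  add_mem' {a b} ha hb := le_trans (norm_add_le_max a b) (max_le ha hb)
  zero_mem' := by simp
  neg_mem' {a} ha := by simpa using ha

namespace UD
open Limits DerivedCategory ZeroObject

set_option linter.unusedSectionVars false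

section thick
universe w v' u'
variable {C : Type u'} [Category.{v'} C] [Abelian C] [HasDerivedCategory.{w} C]

structure IsThick (P : DerivedCategory C → Prop) : Prop where
  iso : ∀ X Y : DerivedCategory C, (X ≅ Y) → P X → P Y
  shift : ∀ X, P X → P (X⟦(1 : ℤ)⟧)
  shift' : ∀ X, P X → P (X⟦(-1 : ℤ)⟧)
  tri : ∀ T : Triangle (DerivedCategory C), (T ∈ distTriang (DerivedCategory C)) →
      P T.obj₁ → P T.obj₂ → P T.obj₃
  retract : ∀ (X Y : DerivedCategory C) (i : X ⟶ Y) (r : Y ⟶ X), i ≫ r = 𝟙 X → P Y → P X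

variable {P : DerivedCategory C → Prop}

lemma IsThick.ses₃ (hP : IsThick P) {S : ShortComplex (CochainComplex C ℤ)} (hS : S.ShortExact)
    (h₁ : P (Q.obj S.X₁)) (h₂ : P (Q.obj S.X₂)) : P (Q.obj S.X₃) :=
  hP.tri _ (triangleOfSES_distinguished hS) h₁ h₂

lemma IsThick.ses₁ (hP : IsThick P) {S : ShortComplex (CochainComplex C ℤ)} (hS : S.ShortExact)
    (h₂ : P (Q.obj S.X₂)) (h₃ : P (Q.obj S.X₃)) : P (Q.obj S.X₁) := by
  have h := hP.tri _ (rot_of_distTriang _ (triangleOfSES_distinguished hS)) h₂ h₃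
  exact hP.iso _ _ ((shiftEquiv (DerivedCategory C) (1 : ℤ)).unitIso.app _).symm (hP.shift' _ h)

lemma IsThick.ses₂ (hP : IsThick P) {S : ShortComplex (CochainComplex C ℤ)} (hS : S.ShortExact)
    (h₁ : P (Q.obj S.X₁)) (h₃ : P (Q.obj S.X₃)) : P (Q.obj S.X₂) := by
  exact hP.tri _ (inv_rot_of_distTriang _ (triangleOfSES_distinguished hS)) (hP.shift' _ h₃) h₁

lemma IsThick.qis (hP : IsThick P) {X Y : CochainComplex C ℤ} (f : X ⟶ Y) [QuasiIso f] :
    P (Q.obj X) ↔ P (Q.obj Y) :=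
  ⟨hP.iso _ _ (asIso (Q.map f)), hP.iso _ _ (asIso (Q.map f)).symm⟩

lemma acyclic_quasiIso {X Y : CochainComplex C ℤ} (f : X ⟶ Y) (hX : X.Acyclic) (hY : Y.Acyclic) :
    QuasiIso f where
  quasiIsoAt i := by
    rw [quasiIsoAt_iff_exactAt _ _ (hX i)]
    exact hY i

lemma ses_qis_g {S : ShortComplex (CochainComplex C ℤ)} (hS : S.ShortExact)
    (h : S.X₁.Acyclic) : QuasiIso S.g where
  quasiIsoAt i := by
    rw [quasiIsoAt_iff_isIso_homologyMap]
    have z (j : ℤ) := (h j).isZero_homology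
    have h1 : Mono (HomologicalComplex.homologyMap S.g i) :=
      (hS.homology_exact₂ i).mono_g ((z i).eq_of_src _ _)
    have h2 : Epi (HomologicalComplex.homologyMap S.g i) :=
      (hS.homology_exact₃ i (i + 1) rfl).epi_f ((z _).eq_of_tgt _ _)
    exact isIso_of_mono_of_epi _

lemma ses_qis_f {S : ShortComplex (CochainComplex C ℤ)} (hS : S.ShortExact)
    (h : S.X₃.Acyclic) : QuasiIso S.f where
  quasiIsoAt i := by
    rw [quasiIsoAt_iff_isIso_homologyMap]
    have z (j : ℤ) := (h j).isZero_homology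
    have h1 : Mono (HomologicalComplex.homologyMap S.f i) :=
      (hS.homology_exact₁ (i - 1) i (by simp)).mono_g ((z _).eq_of_src _ _)
    have h2 : Epi (HomologicalComplex.homologyMap S.f i) :=
      (hS.homology_exact₂ i).epi_f ((z _).eq_of_tgt _ _)
    exact isIso_of_mono_of_epi _

lemma IsThick.acyclic (hP : IsThick P) {X Y : CochainComplex C ℤ} (hX : X.Acyclic)
    (hY : P (Q.obj Y)) : P (Q.obj X) := by
  have h0 : (0 : CochainComplex C ℤ).Acyclic := fun i =>
    ShortComplex.exact_of_isZero_X₂ _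
      ((HomologicalComplex.eval C _ i).map_isZero (isZero_zero _))
  have := acyclic_quasiIso (0 : X ⟶ 0) hX h0
  rw [hP.qis (0 : X ⟶ 0)]
  exact hP.retract _ _ 0 0 ((Q.map_isZero (isZero_zero _)).eq_of_src _ _) hY

/-- the exact sequence of the cone -/
lemma cone_shortExact {X Y : CochainComplex C ℤ} (f : X ⟶ Y) :
    (CochainComplex.mappingCone.triangleRotateShortComplex f).ShortExact :=
  HomologicalComplex.shortExact_of_degreewise_shortExact _ (fun i =>
    (CochainComplex.mappingCone.triangleRotateShortComplexSplitting f i).shortExact)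

lemma cone_id_acyclic (X : CochainComplex C ℤ) :
    (CochainComplex.mappingCone (𝟙 X)).Acyclic := by
  have h : (ShortComplex.mk (𝟙 X) (0 : X ⟶ 0) (by simp)).ShortExact :=
    { exact := (ShortComplex.exact_iff_epi _ rfl).2 (by dsimp; infer_instance)
      mono_f := by dsimp; infer_instance
      epi_g := by dsimp; infer_instance }
  have := CochainComplex.mappingCone.quasiIso_descShortComplex h
  have h0 : (0 : CochainComplex C ℤ).Acyclic := fun i =>
    ShortComplex.exact_of_isZero_X₂ _
      ((HomologicalComplex.eval C _ i).map_isZero (isZero_zero _))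
  intro i
  have h2 := this.quasiIsoAt i
  rwa [quasiIsoAt_iff_exactAt' _ _ (h0 i)] at h2

/-- contravariant functors on complexes preserving short exact sequences and acyclics -/
structure IsGood (Φ : (CochainComplex C ℤ)ᵒᵖ ⥤ CochainComplex C ℤ) : Prop where
  ses : ∀ S : ShortComplex (CochainComplex C ℤ), S.ShortExact →
    ∃ w, (ShortComplex.mk (Φ.map S.g.op) (Φ.map S.f.op) w).ShortExact
  acyc : ∀ X : CochainComplex C ℤ, X.Acyclic → (Φ.obj (.op X)).Acyclic

variable {Φ : (CochainComplex C ℤ)ᵒᵖ ⥤ CochainComplex C ℤ}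

lemma IsGood.qis (hΦ : IsGood Φ) {X Y : CochainComplex C ℤ} (f : X ⟶ Y) [hf : QuasiIso f] :
    QuasiIso (Φ.map f.op) := by
  let Z := CochainComplex.mappingCone (𝟙 X)
  let i : X ⟶ Y ⊞ Z := biprod.lift f (CochainComplex.mappingCone.inr (𝟙 X))
  let p : Y ⊞ Z ⟶ Y := biprod.fst
  have hip : i ≫ p = f := by simp [i, p]
  have hS₂ : (ShortComplex.mk (biprod.inr : Z ⟶ Y ⊞ Z) p (by simp [p])).ShortExact :=
    (ShortComplex.Splitting.mk (S := ShortComplex.mk (biprod.inr : Z ⟶ Y ⊞ Z) p (by simp [p]))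
      biprod.snd biprod.inl (by simp) (by simp [p])
      (by simp only [p]; rw [add_comm]; exact biprod.total)).shortExact
  have hp : QuasiIso p := ses_qis_g hS₂ (cone_id_acyclic X)
  have hi : QuasiIso i := by
    rw [← hip] at hf
    exact quasiIso_of_comp_right i p
  have : Mono (CochainComplex.mappingCone.inr (𝟙 X)) := (cone_shortExact (𝟙 X)).mono_f
  have hm : Mono i := by
    have : Mono (i ≫ biprod.snd) := by simpa [i] using this
    exact mono_of_mono i biprod.snd
  have hS₁ : (ShortComplex.mk i (cokernel.π i) (by simp)).ShortExact :=
    { exact := ShortComplex.exact_cokernel i }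
  have hc := hS₁.acyclic_X₃ hi
  obtain ⟨w₁, h₁⟩ := hΦ.ses _ hS₁
  obtain ⟨w₂, h₂⟩ := hΦ.ses _ hS₂
  have e : Φ.map f.op = Φ.map p.op ≫ Φ.map i.op := by
    rw [← Φ.map_comp, ← op_comp, hip]
  have q₁ : QuasiIso (Φ.map i.op) := ses_qis_g h₁ (hΦ.acyc _ hc)
  have q₂ : QuasiIso (Φ.map p.op) := ses_qis_f h₂ (hΦ.acyc _ (cone_id_acyclic X))
  rw [e]
  infer_instance

noncomputable def good_lift (hΦ : IsGood Φ) : DerivedCategory C ⥤ (DerivedCategory C)ᵒᵖ :=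
  Localization.lift (Φ.rightOp ⋙ Q.op) (W := HomologicalComplex.quasiIso C (ComplexShape.up ℤ))
    (fun X Y f hf => by
      have : QuasiIso f := hf
      have := hΦ.qis f
      dsimp
      infer_instance) Q

noncomputable def good_fac (hΦ : IsGood Φ) (X : CochainComplex C ℤ) :
    ((good_lift hΦ).obj (Q.obj X)).unop ≅ Q.obj (Φ.obj (.op X)) :=
  ((Localization.fac (Φ.rightOp ⋙ Q.op)
    (W := HomologicalComplex.quasiIso C (ComplexShape.up ℤ)) _ Q).app X).unop.symm

def pull (P : DerivedCategory C → Prop) (hΦ : IsGood Φ) (Y : DerivedCategory C) : Prop :=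
  P ((good_lift hΦ).obj Y).unop

lemma pull_iff (hP : IsThick P) (hΦ : IsGood Φ) (X : CochainComplex C ℤ) :
    pull P hΦ (Q.obj X) ↔ P (Q.obj (Φ.obj (.op X))) :=
  ⟨hP.iso _ _ (good_fac hΦ X), hP.iso _ _ (good_fac hΦ X).symm⟩

lemma good_shift (hP : IsThick P) (hΦ : IsGood Φ) (X : CochainComplex C ℤ) :
    P (Q.obj (Φ.obj (.op X))) ↔ P (Q.obj (Φ.obj (.op (X⟦(1 : ℤ)⟧)))) := by
  obtain ⟨w, h⟩ := hΦ.ses _ (cone_shortExact (𝟙 X))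
  have h2 := hΦ.acyc _ (cone_id_acyclic X)
  constructor
  · intro h'
    exact hP.ses₁ h (hP.acyclic h2 h') h'
  · intro h'
    exact hP.ses₃ h h' (hP.acyclic h2 h')

lemma pull_thick (hP : IsThick P) (hΦ : IsGood Φ) : IsThick (pull P hΦ) := by
  have iso : ∀ X Y : DerivedCategory C, (X ≅ Y) → pull P hΦ X → pull P hΦ Y :=
    fun X Y e h => hP.iso _ _ (((good_lift hΦ).mapIso e).unop).symm h
  refine ⟨iso, ?_, ?_, ?_, ?_⟩
  · intro X h
    have h := iso _ _ (Q.objObjPreimageIso X).symm h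
    rw [pull_iff hP, good_shift hP hΦ, ← pull_iff hP hΦ] at h
    exact iso _ _ ((Q.commShiftIso (1 : ℤ)).app _ ≪≫
      (shiftFunctor _ (1 : ℤ)).mapIso (Q.objObjPreimageIso X)) h
  · intro X h
    let Z := Q.objPreimage (X⟦(-1 : ℤ)⟧)
    let e : Q.obj Z ≅ X⟦(-1 : ℤ)⟧ := Q.objObjPreimageIso _
    refine iso _ _ e ?_
    rw [pull_iff hP, good_shift hP hΦ, ← pull_iff hP hΦ]
    exact iso _ _ (((Q.commShiftIso (1 : ℤ)).app _ ≪≫ (shiftFunctor _ (1 : ℤ)).mapIso e ≪≫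
      (shiftEquiv (DerivedCategory C) (1 : ℤ)).counitIso.app X)).symm h
  · intro T hT h₁ h₂
    obtain ⟨X, Y, f, ⟨e⟩⟩ := (mem_distTriang_iff T).1 hT
    have h₁ := iso _ _ (Triangle.π₁.mapIso e) h₁
    have h₂ := iso _ _ (Triangle.π₂.mapIso e) h₂
    refine iso _ _ (Triangle.π₃.mapIso e).symm ?_
    change pull P hΦ (Q.obj X) at h₁
    change pull P hΦ (Q.obj Y) at h₂
    change pull P hΦ (Q.obj (CochainComplex.mappingCone f))
    rw [pull_iff hP] at h₁ h₂ ⊢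
    rw [good_shift hP hΦ] at h₁
    obtain ⟨w, h⟩ := hΦ.ses _ (cone_shortExact f)
    exact hP.ses₂ h h₁ h₂
  · intro X Y i r hir h
    refine hP.retract _ _ ((good_lift hΦ).map r).unop ((good_lift hΦ).map i).unop ?_ h
    rw [← unop_comp, ← Functor.map_comp, hir, CategoryTheory.Functor.map_id, unop_id]

end thick
end UD

namespace UD
open Limits DerivedCategory

section elem
variable {R : Type u} [CommRing R]

abbrev Ch (R : Type u) [CommRing R] := CochainComplex (ModuleCat.{u} R) ℤ

lemma exactAt_iff (X : Ch R) {i j k : ℤ} (hij : i + 1 = j) (hjk : j + 1 = k) :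
    X.ExactAt j ↔ ∀ x : X.X j, X.d j k x = 0 → ∃ y : X.X i, X.d i j y = x := by
  rw [X.exactAt_iff' i j k (by simp; omega) (by simp; omega),
    ShortComplex.moduleCat_exact_iff]
  rfl

lemma acyclic_iff (X : Ch R) :
    X.Acyclic ↔ ∀ (i : ℤ) (x : X.X (i + 1)), X.d (i + 1) (i + 1 + 1) x = 0 →
      ∃ y : X.X i, X.d i (i + 1) y = x := by
  constructor
  · intro h i
    exact (exactAt_iff X rfl rfl).1 (h (i + 1))
  · intro h j
    obtain ⟨i, rfl⟩ : ∃ i, j = i + 1 := ⟨j - 1, by simp⟩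
    exact (exactAt_iff X rfl rfl).2 (h i)

lemma shortExact_of (S : ShortComplex (Ch R))
    (h1 : ∀ i (x : S.X₁.X i), S.f.f i x = 0 → x = 0)
    (h2 : ∀ i (x : S.X₂.X i), S.g.f i x = 0 → ∃ y : S.X₁.X i, S.f.f i y = x)
    (h3 : ∀ i (x : S.X₃.X i), ∃ y : S.X₂.X i, S.g.f i y = x) : S.ShortExact := by
  refine HomologicalComplex.shortExact_of_degreewise_shortExact _ (fun i => ?_)
  refine { exact := ?_, mono_f := ?_, epi_g := ?_ }
  · rw [ShortComplex.moduleCat_exact_iff]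
    exact h2 i
  · rw [ModuleCat.mono_iff_injective]
    exact (injective_iff_map_eq_zero _).2 (h1 i)
  · rw [ModuleCat.epi_iff_surjective]
    exact h3 i

variable {S : ShortComplex (Ch R)}

lemma ses_eval (hS : S.ShortExact) (i : ℤ) : (S.map (HomologicalComplex.eval _ _ i)).ShortExact :=
  hS.map_of_exact _

lemma ses_inj (hS : S.ShortExact) (i : ℤ) (x : S.X₁.X i) (hx : S.f.f i x = 0) : x = 0 := by
  have := (ses_eval hS i).mono_f
  rw [ModuleCat.mono_iff_injective] at this
  exact (injective_iff_map_eq_zero _).1 this x hx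

lemma ses_ex (hS : S.ShortExact) (i : ℤ) (x : S.X₂.X i) (hx : S.g.f i x = 0) : ∃ y : S.X₁.X i, S.f.f i y = x := by
  have := (ses_eval hS i).exact
  rw [ShortComplex.moduleCat_exact_iff] at this
  exact this x hx

lemma ses_surj (hS : S.ShortExact) (i : ℤ) (x : S.X₃.X i) : ∃ y : S.X₂.X i, S.g.f i y = x := by
  have := (ses_eval hS i).epi_g
  rw [ModuleCat.epi_iff_surjective] at this
  exact this x

lemma ses_zero (i : ℤ) (x : S.X₁.X i) : S.g.f i (S.f.f i x) = 0 := by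
  rw [← ModuleCat.comp_apply, ← HomologicalComplex.comp_f, S.zero]
  rfl

lemma ch_hom_ext {X Y : Ch R} {f g : X ⟶ Y} (h : ∀ i (x : X.X i), f.f i x = g.f i x) : f = g := by
  ext i x
  exact h i x
end elem

section dd
variable {R : Type u} [CommRing R] 
@[simp] lemma dd (X : Ch R) (i j k : ℤ) (x : X.X i) : X.d j k (X.d i j x) = 0 := by
  rw [← ModuleCat.comp_apply, X.d_comp_d]; rfl

lemma comm_apply {X Y : Ch R} (f : X ⟶ Y) (i j : ℤ) (x : X.X i) :
    f.f j (X.d i j x) = Y.d i j (f.f i x) := by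
  rw [← ModuleCat.comp_apply, ← ModuleCat.comp_apply, f.comm]
end dd

section H
variable {R : Type u} [CommRing R] (J : ℕ → Ch R)
open CochainComplex HomComplex

noncomputable def Hobj (X : Ch R) : Ch R where
  X p := ModuleCat.of R (∀ n, Cochain X (J n) p)
  d p q := ModuleCat.ofHom (LinearMap.pi fun n => (δ_hom R X (J n) p q).comp (LinearMap.proj n))
  shape p q h := by
    ext z n : 3
    exact δ_shape p q h (z n)
  d_comp_d' p q r _ _ := by
    refine ModuleCat.hom_ext (LinearMap.ext fun z => funext fun n => ?_)
    exact δ_δ p q r (z n)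

lemma Hobj_d {X : Ch R} (p q : ℤ) (z : ∀ n, Cochain X (J n) p) (n) :
    (((Hobj J X).d p q).hom z : ∀ n, Cochain X (J n) q) n = δ p q (z n) := rfl

noncomputable def Hmap {X Y : Ch R} (f : X ⟶ Y) : Hobj J Y ⟶ Hobj J X where
  f p := ModuleCat.ofHom (LinearMap.pi fun n =>
    { toFun := fun z => (Cochain.ofHom f).comp (z n) (zero_add p)
      map_add' := fun z z' => Cochain.comp_add _ _ _ _
      map_smul' := fun r z => Cochain.comp_smul _ _ _ _ })
  comm' p q h := by
    refine ModuleCat.hom_ext (LinearMap.ext fun z => funext fun n => ?_)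
    exact δ_ofHom_comp f (z n) q

lemma Hmap_f {X Y : Ch R} (f : X ⟶ Y) (p : ℤ) (z : ∀ n, Cochain Y (J n) p) (n) :
    (((Hmap J f).f p).hom z : ∀ n, Cochain X (J n) p) n = 
      (Cochain.ofHom f).comp (z n) (zero_add p) := rfl

noncomputable def H : (Ch R)ᵒᵖ ⥤ Ch R where
  obj X := Hobj J X.unop
  map f := Hmap J f.unop
  map_id X := by
    refine ch_hom_ext fun p (z : ∀ n, Cochain _ (J n) p) => funext fun n => ?_
    exact Cochain.id_comp (z n)
  map_comp f g := by
    refine ch_hom_ext fun p (z : ∀ n, Cochain _ (J n) p) => funext fun n => ?_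
    change (Cochain.ofHom (g.unop ≫ f.unop)).comp (z n) (zero_add p) =
      (Cochain.ofHom g.unop).comp ((Cochain.ofHom f.unop).comp (z n) (zero_add p)) (zero_add p)
    rw [Cochain.ofHom_comp, Cochain.comp_assoc_of_first_is_zero_cochain]

lemma H_add {X Y : Ch R} (f g : X ⟶ Y) : (H J).map (f + g).op = (H J).map f.op + (H J).map g.op := by
  refine ch_hom_ext fun p (z : ∀ n, Cochain _ (J n) p) => funext fun n => ?_
  change (Cochain.ofHom (f + g)).comp (z n) (zero_add p) = 
    (Cochain.ofHom f).comp (z n) (zero_add p) + (Cochain.ofHom g).comp (z n) (zero_add p)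
  rw [Cochain.ofHom_add, Cochain.add_comp]

lemma H_smul {X Y : Ch R} (f : X ⟶ Y) (r : R) : (H J).map (r • f).op = r • (H J).map f.op := by
  refine ch_hom_ext fun p (z : ∀ n, Cochain _ (J n) p) => funext fun n => ?_
  change (Cochain.ofHom (r • f)).comp (z n) (zero_add p) = 
    r • (Cochain.ofHom f).comp (z n) (zero_add p)
  rw [← Cochain.smul_comp]
  congr 1
  ext i : 1
  simp [Cochain.smul_v]

lemma H_good (hJ : ∀ n i, Injective ((J n).X i)) (hK : ∀ n, (J n).IsKInjective) :
    IsGood (H J) where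
  ses S hS := by
    have w : (H J).map S.g.op ≫ (H J).map S.f.op = 0 := by
      rw [← Functor.map_comp, ← op_comp, S.zero]
      have := H_smul J (0 : S.X₁ ⟶ S.X₃) (0 : R)
      simpa using this
    refine ⟨w, shortExact_of _ ?_ ?_ ?_⟩
    · intro p (z : ∀ n, Cochain _ (J n) p) hz
      funext n
      have hz : (Cochain.ofHom S.g).comp (z n) (zero_add p) = 0 := congr_fun hz n
      ext i j hij : 1
      have h := Cochain.congr_v hz i j hij
      rw [Cochain.zero_cochain_comp_v, Cochain.ofHom_v] at h
      have := (ses_eval hS i).epi_g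
      change Epi (S.g.f i) at this
      rw [Cochain.zero_v] at h
      exact (cancel_epi (S.g.f i)).1 (h.trans (comp_zero).symm)
    · intro p (z : ∀ n, Cochain _ (J n) p) hz
      have hz (n : ℕ) : (Cochain.ofHom S.f).comp (z n) (zero_add p) = 0 := congr_fun hz n
      have (n i j) (hij : i + p = j) : ∃ y : S.X₃.X i ⟶ (J n).X j, S.g.f i ≫ y = (z n).v i j hij := by
        have h := Cochain.congr_v (hz n) i j hij
        rw [Cochain.zero_cochain_comp_v, Cochain.ofHom_v, Cochain.zero_v] at h
        have hS' := ses_eval hS i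
        have := hS'.epi_g
        exact ⟨hS'.exact.desc _ h, hS'.exact.g_desc _ h⟩
      choose y hy using this
      refine ⟨fun n => Cochain.mk (y n), ?_⟩
      funext n
      change (Cochain.ofHom S.g).comp (Cochain.mk (y n)) (zero_add p) = z n
      ext i j hij : 1
      rw [Cochain.zero_cochain_comp_v, Cochain.ofHom_v, Cochain.mk_v, hy]
    · intro p (z : ∀ n, Cochain _ (J n) p)
      have (n i j) (hij : i + p = j) : ∃ y : S.X₂.X i ⟶ (J n).X j, S.f.f i ≫ y = (z n).v i j hij := by
        have := (ses_eval hS i).mono_f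
        change Mono (S.f.f i) at this
        have := hJ n j
        exact ⟨Injective.factorThru _ (S.f.f i), Injective.comp_factorThru _ _⟩
      choose y hy using this
      refine ⟨fun n => Cochain.mk (y n), ?_⟩
      funext n
      change (Cochain.ofHom S.f).comp (Cochain.mk (y n)) (zero_add p) = z n
      ext i j hij : 1
      rw [Cochain.zero_cochain_comp_v, Cochain.ofHom_v, Cochain.mk_v, hy]
  acyc X hX := by
    rw [acyclic_iff]
    intro p (z : ∀ n, Cochain _ (J n) (p + 1)) hz
    have hz (n : ℕ) : δ (p + 1) (p + 1 + 1) (z n) = 0 := congr_fun hz n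
    have (n : ℕ) : ∃ y : Cochain X (J n) p, δ p (p + 1) y = z n := by
      have := hK n
      obtain ⟨y, hy⟩ := CochainComplex.IsKInjective.eq_δ_of_cocycle 
        (Cocycle.mk (z n) _ rfl (hz n)) hX p rfl
      exact ⟨y, hy⟩
    choose y hy using this
    exact ⟨y, funext hy⟩

end H
end UD

namespace UD
open Limits DerivedCategory

section res
variable {R S : Type u} [CommRing R] [CommRing S] (f : R →+* S)

noncomputable abbrev res : Ch S ⥤ Ch R :=
  (ModuleCat.restrictScalars.{u} f).mapHomologicalComplex (ComplexShape.up ℤ)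

lemma of_action (Y : Ch R) (ρ : S → (Y ⟶ Y)) (h1 : ρ 1 = 𝟙 Y)
    (hm : ∀ a b, ρ (a * b) = ρ b ≫ ρ a) (ha : ∀ a b, ρ (a + b) = ρ a + ρ b)
    (hr : ∀ r, ρ (f r) = r • 𝟙 Y) : ∃ K : Ch S, Nonempty ((res f).obj K ≅ Y) := by
  have h0 : ρ 0 = 0 := by simpa using ha 0 0
  let inst (i : ℤ) : Module S (Y.X i) :=
    { smul := fun a x => (ρ a).f i x
      one_smul := fun x => by
        change (ρ 1).f i x = x
        rw [h1]; rfl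
      mul_smul := fun a b x => by
        change (ρ (a * b)).f i x = (ρ a).f i ((ρ b).f i x)
        rw [hm]; rfl
      smul_zero := fun a => map_zero ((ρ a).f i).hom
      smul_add := fun a => map_add ((ρ a).f i).hom
      add_smul := fun a b x => by
        change (ρ (a + b)).f i x = (ρ a).f i x + (ρ b).f i x
        rw [ha]; rfl
      zero_smul := fun x => by
        change (ρ 0).f i x = 0
        rw [h0]; rfl }
  let K : Ch S :=
    { X := fun i => @ModuleCat.of S _ (Y.X i) _ (inst i)
      d := fun i j => @ModuleCat.ofHom S _ (Y.X i) (Y.X j) _ (inst i) _ (inst j)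
        { toFun := Y.d i j
          map_add' := map_add (Y.d i j).hom
          map_smul' := fun a x => (comm_apply (ρ a) i j x).symm }
      shape := fun i j h => by
        refine ModuleCat.hom_ext (LinearMap.ext fun x => ?_)
        change Y.d i j x = 0
        rw [Y.shape i j h]; rfl
      d_comp_d' := fun i j k _ _ => by
        refine ModuleCat.hom_ext (LinearMap.ext fun x => ?_)
        exact dd Y i j k x }
  have hr' : ∀ i (r : R) (x : Y.X i), (ρ (f r)).f i x = r • x := fun i r x => by
    rw [hr]; rfl
  let e (i : ℤ) : ((res f).obj K).X i ≃ₗ[R] Y.X i :=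
    { toFun := fun x => x
      invFun := fun x => x
      map_add' := fun _ _ => rfl
      map_smul' := fun r x => hr' i r x
      left_inv := fun _ => rfl
      right_inv := fun _ => rfl }
  exact ⟨K, ⟨HomologicalComplex.Hom.isoOfComponents (fun i => (e i).toModuleIso)
    (fun i j _ => rfl)⟩⟩
end res

section qis
variable {R : Type u} [CommRing R]

lemma quasiIso_of_surj {X Y : Ch R} (f : X ⟶ Y) (hs : ∀ i (y : Y.X i), ∃ x : X.X i, f.f i x = y)
    (hk : ∀ i (x : X.X (i + 1)), f.f (i + 1) x = 0 → X.d (i + 1) (i + 1 + 1) x = 0 →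
      ∃ y : X.X i, f.f i y = 0 ∧ X.d i (i + 1) y = x) : QuasiIso f := by
  have he : Epi f := by
    have (i : ℤ) : Epi (f.f i) := by
      rw [ModuleCat.epi_iff_surjective]
      exact hs i
    exact HomologicalComplex.epi_of_epi_f f this
  have hS : (ShortComplex.mk (kernel.ι f) f (by simp)).ShortExact :=
    { exact := ShortComplex.exact_kernel f }
  have := HasDerivedCategory.standard (ModuleCat.{u} R)
  refine ses_qis_g hS ?_
  change (kernel f).Acyclic
  rw [acyclic_iff]
  intro i x hx
  obtain ⟨y, hy1, hy2⟩ := hk i ((kernel.ι f).f _ x) (ses_zero (S := ShortComplex.mk (kernel.ι f) f (by simp)) _ x) (by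
    rw [← comm_apply, hx, map_zero])
  obtain ⟨z, hz⟩ := ses_ex hS i y hy1
  refine ⟨z, ?_⟩
  rw [← sub_eq_zero]
  apply ses_inj hS
  dsimp only at hz ⊢
  rw [map_sub, comm_apply, hz, hy2, sub_self]
end qis

section C
variable {R : Type u} [CommRing R] (ϖ : R)

section
variable {M N : Type u} [AddCommGroup M] [Module R M] [AddCommGroup N] [Module R N]
variable (M) in
def th : (ℕ → M) →ₗ[R] (ℕ → M) where
  toFun y n := Nat.casesOn n 0 (fun k => y k) - ϖ • y n
  map_add' y z := by
    funext n
    cases n <;> simp <;> abel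
  map_smul' r y := by
    funext n
    cases n <;> simp [smul_sub, smul_comm r]

lemma th_zero (y : ℕ → M) : th ϖ M y 0 = - (ϖ • y 0) := by simp [th]
lemma th_succ (y : ℕ → M) (n) : th ϖ M y (n + 1) = y n - ϖ • y (n + 1) := rfl

lemma th_nat (φ : M →ₗ[R] N) (y : ℕ → M) (n) : φ (th ϖ M y n) = th ϖ N (fun k => φ (y k)) n := by
  cases n <;> simp [th_zero, th_succ]
end

noncomputable def Cd (X : Ch R) (i : ℤ) : ((ℕ → X.X (i + 1)) × (ℕ → X.X i)) →ₗ[R]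
    ((ℕ → X.X (i + 1 + 1)) × (ℕ → X.X (i + 1))) where
  toFun ab := (fun n => - X.d (i + 1) (i + 1 + 1) (ab.1 n),
    th ϖ _ ab.1 + fun n => X.d i (i + 1) (ab.2 n))
  map_add' x y := by
    refine Prod.ext ?_ ?_ <;> funext n <;> simp [add_comm] <;> abel
  map_smul' r x := by
    refine Prod.ext ?_ ?_ <;> funext n <;> simp

lemma Cd_Cd (X : Ch R) (i : ℤ) (x) : Cd ϖ X (i + 1) (Cd ϖ X i x) = 0 := by
  refine Prod.ext ?_ ?_ <;> funext n 
  · simp [Cd]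
  · have := th_nat ϖ (X.d (i + 1) (i + 1 + 1)).hom x.1 n
    have h2 : th ϖ _ (fun n => - X.d (i + 1) (i + 1 + 1) (x.1 n)) = 
      - th ϖ _ (fun n => X.d (i + 1) (i + 1 + 1) (x.1 n)) := map_neg (th ϖ _) _
    simp only [Cd, LinearMap.coe_mk, AddHom.coe_mk, h2, Pi.add_apply, Pi.neg_apply, map_add, dd]
    erw [this]
    simp

noncomputable def Cobj (X : Ch R) : Ch R :=
  CochainComplex.of (fun i => ModuleCat.of R ((ℕ → X.X (i + 1)) × (ℕ → X.X i)))
    (fun i => ModuleCat.ofHom (Cd ϖ X i)) (fun i => by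
      refine ModuleCat.hom_ext (LinearMap.ext fun x => ?_)
      exact Cd_Cd ϖ X i x)

lemma Cobj_d (X : Ch R) (i : ℤ) (x : (ℕ → X.X (i + 1)) × (ℕ → X.X i)) :
    (Cobj ϖ X).d i (i + 1) x = Cd ϖ X i x := by
  exact DFunLike.congr_fun (congr_arg ModuleCat.Hom.hom (CochainComplex.of_d
    (fun i => ModuleCat.of R ((ℕ → X.X (i + 1)) × (ℕ → X.X i)))
    (fun i => ModuleCat.ofHom (Cd ϖ X i)) i)) x

/-- maps elementwise -/
def mkHom {X Y : Ch R} (φ : ∀ i, X.X i →ₗ[R] Y.X i)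
    (h : ∀ i x, φ (i + 1) (X.d i (i + 1) x) = Y.d i (i + 1) (φ i x)) : X ⟶ Y where
  f i := ModuleCat.ofHom (φ i)
  comm' i j hij := by
    obtain rfl : i + 1 = j := hij
    refine ModuleCat.hom_ext (LinearMap.ext fun x => ?_)
    exact (h i x).symm

noncomputable def Cmap {X Y : Ch R} (f : X ⟶ Y) : Cobj ϖ X ⟶ Cobj ϖ Y :=
  mkHom (fun i => (LinearMap.prodMap (LinearMap.pi fun n => (f.f (i + 1)).hom ∘ₗ LinearMap.proj n)
      (LinearMap.pi fun n => (f.f i).hom ∘ₗ LinearMap.proj n) : 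
      ((ℕ → X.X (i + 1)) × (ℕ → X.X i)) →ₗ[R] ((ℕ → Y.X (i + 1)) × (ℕ → Y.X i))))
    (fun i (x : (ℕ → X.X (i + 1)) × (ℕ → X.X i)) => by
      rw [Cobj_d]
      refine Eq.trans ?_ (Cobj_d ϖ Y i (fun n => f.f _ (x.1 n), fun n => f.f _ (x.2 n))).symm
      refine Prod.ext ?_ ?_ <;> funext n 
      · change f.f _ (- X.d _ _ (x.1 n)) = - Y.d _ _ (f.f _ (x.1 n))
        rw [map_neg, comm_apply]
      · change f.f _ (th ϖ _ x.1 n + X.d _ _ (x.2 n)) = _ + Y.d _ _ (f.f _ (x.2 n))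
        rw [map_add, comm_apply]
        congr 1
        exact th_nat ϖ (f.f (i + 1)).hom x.1 n)

noncomputable def Cf : Ch R ⥤ Ch R where
  obj := Cobj ϖ
  map := Cmap ϖ
  map_id _ := rfl
  map_comp _ _ := rfl

lemma C_ses (S : ShortComplex (Ch R)) (hS : S.ShortExact) :
    ∃ w, (ShortComplex.mk ((Cf ϖ).map S.f) ((Cf ϖ).map S.g) w).ShortExact := by
  have w : (Cf ϖ).map S.f ≫ (Cf ϖ).map S.g = 0 := by
    rw [← Functor.map_comp, S.zero]
    rfl
  refine ⟨w, shortExact_of _ ?_ ?_ ?_⟩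
  · intro i (x : (ℕ → S.X₁.X (i + 1)) × (ℕ → S.X₁.X i)) hx
    have h1 := congr_arg Prod.fst hx
    have h2 := congr_arg Prod.snd hx
    refine Prod.ext ?_ ?_ <;> funext n 
    · exact ses_inj hS _ _ (congr_fun h1 n)
    · exact ses_inj hS _ _ (congr_fun h2 n)
  · intro i (x : (ℕ → S.X₂.X (i + 1)) × (ℕ → S.X₂.X i)) hx
    have h1 := congr_arg Prod.fst hx
    have h2 := congr_arg Prod.snd hx
    choose a ha using fun n => ses_ex hS _ _ (congr_fun h1 n)
    choose b hb using fun n => ses_ex hS _ _ (congr_fun h2 n)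
    exact ⟨(a, b), Prod.ext (funext ha) (funext hb)⟩
  · intro i (x : (ℕ → S.X₃.X (i + 1)) × (ℕ → S.X₃.X i))
    choose a ha using fun n => ses_surj hS _ (x.1 n)
    choose b hb using fun n => ses_surj hS _ (x.2 n)
    exact ⟨(a, b), Prod.ext (funext ha) (funext hb)⟩

lemma C_acyclic (X : Ch R) (hX : X.Acyclic) : (Cobj ϖ X).Acyclic := by
  rw [acyclic_iff] at hX ⊢
  intro i (x : (ℕ → X.X (i + 1 + 1)) × (ℕ → X.X (i + 1))) hx
  rw [Cobj_d] at hx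
  have h1 := congr_arg Prod.fst hx
  have h2 := congr_arg Prod.snd hx
  have h1' (n) : X.d _ (i + 1 + 1 + 1) (x.1 n) = 0 := neg_eq_zero.1 (congr_fun h1 n)
  choose c hc using fun n => hX _ _ (h1' n)
  have h3 (n : ℕ) : X.d _ (i + 1 + 1) (x.2 n + th ϖ _ c n) = 0 := by
    have h2' : th ϖ _ x.1 n + X.d _ (i + 1 + 1) (x.2 n) = 0 := congr_fun h2 n
    have h4 := th_nat ϖ (X.d (i + 1) (i + 1 + 1)).hom c n
    rw [map_add]
    erw [h4]
    have h5 : (fun k => (X.d (i + 1) (i + 1 + 1)).hom (c k)) = x.1 := funext hc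
    rw [h5]
    exact (add_comm _ _).trans h2'
  choose e he using fun n => hX _ _ (h3 n)
  refine ⟨(-c, e), ?_⟩
  refine (Cobj_d ϖ X i (-c, e)).trans ?_
  refine Prod.ext ?_ ?_ <;> funext n
  · simp [Cd, hc]
  · simp [Cd, he]

noncomputable def evMap {X Y : Ch R} (e : ∀ i, (ℕ → X.X i) →ₗ[R] Y.X i) (h1 : ∀ i a, e i (th ϖ _ a) = 0)
    (h2 : ∀ i (b : ℕ → X.X i), e (i + 1) (fun n => X.d i (i + 1) (b n)) = Y.d i (i + 1) (e i b)) :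
    Cobj ϖ X ⟶ Y :=
  mkHom (fun i => (e i ∘ₗ LinearMap.snd R _ _ : ((ℕ → X.X (i + 1)) × (ℕ → X.X i)) →ₗ[R] Y.X i))
    (fun i (x : (ℕ → X.X (i + 1)) × (ℕ → X.X i)) => by
      rw [Cobj_d]
      change e (i + 1) (th ϖ _ x.1 + fun n => X.d i (i + 1) (x.2 n)) = _
      rw [map_add, h1, h2, zero_add]
      rfl)

lemma evMap_qis {X Y : Ch R} (e : ∀ i, (ℕ → X.X i) →ₗ[R] Y.X i) (h1 : ∀ i a, e i (th ϖ _ a) = 0)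
    (h2 : ∀ i (b : ℕ → X.X i), e (i + 1) (fun n => X.d i (i + 1) (b n)) = Y.d i (i + 1) (e i b))
    (h3 : ∀ i, Function.Surjective (e i)) (h4 : ∀ i b, e i b = 0 → ∃ c, th ϖ _ c = b)
    (h5 : ∀ i (c : ℕ → X.X i), th ϖ _ c = 0 → c = 0) : QuasiIso (evMap ϖ e h1 h2) := by
  refine quasiIso_of_surj _ ?_ ?_
  · intro i y
    obtain ⟨b, hb⟩ := h3 i y
    exact ⟨(0, b), hb⟩
  · intro i (x : (ℕ → X.X (i + 1 + 1)) × (ℕ → X.X (i + 1))) hx hd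
    obtain ⟨a, b⟩ := x
    obtain ⟨c, rfl⟩ := h4 _ b hx
    rw [Cobj_d] at hd
    have hd2 := congr_arg Prod.snd hd
    refine ⟨(c, 0), map_zero (e i), ?_⟩
    refine (Cobj_d ϖ X i (c, 0)).trans ?_
    refine Prod.ext ?_ ?_ 
    · have : a + (fun n => X.d _ (i + 1 + 1) (c n)) = 0 := by
        apply h5
        rw [map_add]
        have hd2 : th ϖ _ a + (fun n => X.d _ (i + 1 + 1) (th ϖ _ c n)) = 0 := hd2
        rw [← hd2]
        congr 1
        funext n
        exact (th_nat ϖ (X.d (i + 1) (i + 1 + 1)).hom c n).symm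
      funext n
      exact neg_eq_of_add_eq_zero_left (congr_fun this n)
    · funext n
      simp [Cd]

end C
end UD

namespace UD
open Limits DerivedCategory

section adic
variable {S : Type u} [CommRing S] (ϖ : S)
variable {M N : Type u} [AddCommGroup M] [Module S M] [AddCommGroup N] [Module S N]

lemma mem_pow_iff (n : ℕ) (x : M) :
    x ∈ ((Ideal.span {ϖ}) ^ n • ⊤ : Submodule S M) ↔ ∃ z : M, ϖ ^ n • z = x := by
  rw [Ideal.span_singleton_pow, Submodule.ideal_span_singleton_smul,
    Submodule.mem_smul_pointwise_iff_exists]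
  simp

variable (M) in
noncomputable def psum (n : ℕ) : (ℕ → M) →ₗ[S] M :=
  ∑ i ∈ Finset.range n, ϖ ^ i • LinearMap.proj i

lemma psum_apply (n : ℕ) (a : ℕ → M) : psum ϖ M n a = ∑ i ∈ Finset.range n, ϖ ^ i • a i := by
  simp [psum]

lemma psum_succ (n : ℕ) (a : ℕ → M) : psum ϖ M (n + 1) a = psum ϖ M n a + ϖ ^ n • a n := by
  simp only [psum_apply, Finset.sum_range_succ]

lemma psum_mem {m n : ℕ} (h : m ≤ n) (a : ℕ → M) : 
    psum ϖ M n a - psum ϖ M m a ∈ ((Ideal.span {ϖ}) ^ m • ⊤ : Submodule S M) := by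
  induction n, h using Nat.le_induction with
  | base => simp
  | succ n hn ih =>
    rw [psum_succ, add_sub_right_comm]
    refine add_mem ih ((mem_pow_iff ϖ _ _).2 ⟨ϖ ^ (n - m) • a n, ?_⟩)
    rw [smul_smul, ← pow_add]
    congr 2
    omega

variable (M) in
noncomputable def evL : (ℕ → M) →ₗ[S] AdicCompletion (Ideal.span {ϖ}) M :=
  AdicCompletion.lift _ (fun n => (Submodule.mkQ _) ∘ₗ psum ϖ M n) (fun {m n} h => by
    refine LinearMap.ext fun a => ?_
    change (Submodule.Quotient.mk (psum ϖ M n a) : M ⧸ _) = Submodule.Quotient.mk (psum ϖ M m a)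
    rw [Submodule.Quotient.eq]
    exact psum_mem ϖ h a)

lemma evL_val (a : ℕ → M) (n : ℕ) : (evL ϖ M a).val n = Submodule.Quotient.mk (psum ϖ M n a) := rfl

lemma evL_eq_zero_iff (a : ℕ → M) : evL ϖ M a = 0 ↔ ∀ n, ∃ z, ϖ ^ n • z = psum ϖ M n a := by
  rw [AdicCompletion.ext_iff]
  refine forall_congr' fun n => ?_
  rw [evL_val, AdicCompletion.val_zero_apply, Submodule.Quotient.mk_eq_zero, mem_pow_iff]

lemma evL_nat (φ : M →ₗ[S] N) (a : ℕ → M) : 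
    AdicCompletion.map (Ideal.span {ϖ}) φ (evL ϖ M a) = evL ϖ N (fun n => φ (a n)) := by
  refine AdicCompletion.ext fun n => ?_
  rw [AdicCompletion.map_val_apply, evL_val, evL_val]
  change Submodule.Quotient.mk (φ (psum ϖ M n a)) = _
  congr 1
  simp [psum_apply]

lemma evL_th (c : ℕ → M) : evL ϖ M (th ϖ M c) = 0 := by
  rw [evL_eq_zero_iff]
  have (n : ℕ) : psum ϖ M (n + 1) (th ϖ M c) = - (ϖ ^ (n + 1) • c n) := by
    induction n with
    | zero => simp [psum_apply, th_zero]
    | succ n ih => 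
      rw [psum_succ, ih, th_succ, smul_sub, smul_smul, ← pow_succ]
      abel
  intro n
  cases n with
  | zero => exact ⟨0, by simp [psum_apply]⟩
  | succ n => exact ⟨- c n, by rw [this, smul_neg]⟩

variable (htf : ∀ m : M, ϖ • m = 0 → m = 0)

lemma tf_pow (htf : ∀ m : M, ϖ • m = 0 → m = 0) (n : ℕ) (m : M) (h : ϖ ^ n • m = 0) : m = 0 := by
  induction n with
  | zero => simpa using h
  | succ n ih =>
    rw [pow_succ', mul_smul] at h
    exact ih (htf _ h)

lemma th_inj (htf : ∀ m : M, ϖ • m = 0 → m = 0) (c : ℕ → M) (h : th ϖ M c = 0) : c = 0 := by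
  funext n
  induction n with
  | zero => 
    have := congr_fun h 0
    rw [th_zero] at this
    exact htf _ (neg_eq_zero.1 this)
  | succ n ih =>
    have := congr_fun h (n + 1)
    rw [th_succ, ih] at this
    exact htf _ (by simpa using this)

lemma evL_ker (htf : ∀ m : M, ϖ • m = 0 → m = 0) (b : ℕ → M) (h : evL ϖ M b = 0) : 
    ∃ c, th ϖ M c = b := by
  rw [evL_eq_zero_iff] at h
  choose z hz using h
  have hb (n : ℕ) : b n = ϖ • z (n + 1) - z n := by
    have := hz (n + 1)
    rw [psum_succ, ← hz n, pow_succ, mul_smul, ← smul_add] at this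
    rw [← sub_eq_zero]
    apply tf_pow ϖ htf n
    rw [← sub_eq_zero, ← smul_sub] at this
    rw [← neg_eq_zero, ← smul_neg, ← this]
    congr 1
    abel
  have h0 : z 0 = 0 := by simpa [psum_apply] using hz 0
  refine ⟨fun n => - z (n + 1), ?_⟩
  funext n
  cases n with
  | zero => rw [th_zero, hb, h0]; simp
  | succ n => rw [th_succ, hb, smul_neg]; abel

lemma evL_surj : Function.Surjective (evL ϖ M) := by
  intro x
  have (n : ℕ) : ∃ y : M, Submodule.Quotient.mk y = x.val n ∧ (n = 0 → y = 0) := by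
    cases n with
    | zero => 
      refine ⟨0, ?_, fun _ => rfl⟩
      obtain ⟨y, hy⟩ := Submodule.Quotient.mk_surjective _ (x.val 0)
      rw [← hy, Submodule.Quotient.eq]
      simp
    | succ n =>
      obtain ⟨y, hy⟩ := Submodule.Quotient.mk_surjective _ (x.val (n + 1))
      exact ⟨y, hy, by simp⟩
  choose y hy hy0 using this
  have (n : ℕ) : ∃ b : M, ϖ ^ n • b = y (n + 1) - y n := by
    rw [← mem_pow_iff, ← Submodule.Quotient.eq, hy, ← x.2 (Nat.le_succ n)]
    change _ = AdicCompletion.transitionMap _ _ _ (x.val (n + 1))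
    rw [← hy (n + 1)]
    rfl
  choose b hb using this
  refine ⟨b, AdicCompletion.ext fun n => ?_⟩
  rw [evL_val, ← hy]
  congr 1
  induction n with
  | zero => rw [hy0 0 rfl]; simp [psum_apply]
  | succ n ih => rw [psum_succ, ih, hb]; abel

lemma complete_of_equiv (I : Ideal S) (e : M ≃ₗ[S] N) (h : IsAdicComplete I M) : 
    IsAdicComplete I N := by
  rw [← AdicCompletion.of_bijective_iff] at h ⊢
  have : (AdicCompletion.of I N : N → _) = 
      AdicCompletion.congr I e ∘ AdicCompletion.of I M ∘ e.symm := by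
    funext x
    change _ = AdicCompletion.map I _ (AdicCompletion.of I M (e.symm x))
    rw [AdicCompletion.map_of]
    simp
  rw [this]
  exact (AdicCompletion.congr I e).bijective.comp (h.comp e.symm.bijective)
end adic

section hat
variable {R S : Type u} [CommRing R] [CommRing S] (f : R →+* S) 

noncomputable def hat (I : Ideal S) (K : Ch S) : Ch (AdicCompletion I S) where
  X i := ModuleCat.of _ (AdicCompletion I (K.X i))
  d i j := ModuleCat.ofHom (AdicCompletion.map I (K.d i j).hom)
  shape i j h := by
    rw [K.shape i j h]
    simp
  d_comp_d' i j k _ _ := by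
    rw [← ModuleCat.ofHom_comp, AdicCompletion.map_comp, ← ModuleCat.hom_comp, K.d_comp_d]
    simp

lemma C_hat (ϖ : R) (ϖ' : S) (hϖ : f ϖ = ϖ') (K : Ch S) (hK : ∀ i (x : K.X i), ϖ' • x = 0 → x = 0) :
    ∃ φ : Cobj ϖ ((res f).obj K) ⟶
      (res ((algebraMap S (AdicCompletion (Ideal.span {ϖ'}) S)).comp f)).obj (hat (Ideal.span {ϖ'}) K),
      QuasiIso φ := by
  subst hϖ
  have hth (i : ℤ) (a : ℕ → K.X i) : th (R := R) ϖ (((res f).obj K).X i) a = th (f ϖ) (K.X i) a := by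
    funext n
    cases n <;> rfl
  refine ⟨evMap ϖ (fun i => 
    { toFun := fun a => evL (f ϖ) (K.X i) a
      map_add' := fun a b => map_add (evL (f ϖ) (K.X i)) a b
      map_smul' := fun r a => ?_ }) ?_ ?_, evMap_qis _ _ _ _ ?_ ?_ ?_⟩
  · refine (map_smul (evL (f ϖ) (K.X i)) (f r) (show ℕ → K.X i from a)).trans ?_
    exact (algebraMap_smul (AdicCompletion (Ideal.span {f ϖ}) S) (f r) (evL (f ϖ) (K.X i) a)).symm
  · intro i a
    refine Eq.trans ?_ (evL_th (f ϖ) (M := K.X i) a)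
    exact congr_arg (evL (f ϖ) (K.X i)) (hth i a)
  · intro i b
    exact (evL_nat (f ϖ) (K.d i (i + 1)).hom b).symm
  · intro i
    exact evL_surj (f ϖ) (M := K.X i)
  · intro i b h
    obtain ⟨c, hc⟩ := evL_ker (f ϖ) (hK i) b h
    exact ⟨c, (hth i c).trans hc⟩
  · intro i c h
    exact th_inj (f ϖ) (hK i) c ((hth i c).symm.trans h)

lemma C_complete (ϖ : R) (X : Ch R) (hX : ∀ i (x : X.X i), ϖ • x = 0 → x = 0)
    (hc : ∀ i, IsAdicComplete (Ideal.span {ϖ}) (X.X i)) :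
    ∃ φ : Cobj ϖ X ⟶ X, QuasiIso φ := by
  refine ⟨evMap ϖ (fun i => 
    (AdicCompletion.ofLinearEquiv (Ideal.span {ϖ}) (X.X i)).symm.toLinearMap ∘ₗ evL ϖ (X.X i)) ?_ ?_, 
    evMap_qis _ _ _ _ ?_ ?_ ?_⟩
  · intro i a
    simp [evL_th]
  · intro i b
    apply (AdicCompletion.of_injective (Ideal.span {ϖ}) (X.X (i + 1)))
    have := AdicCompletion.map_of (Ideal.span {ϖ}) (X.d i (i + 1)).hom
      ((AdicCompletion.ofLinearEquiv (Ideal.span {ϖ}) (X.X i)).symm (evL ϖ (X.X i) b))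
    refine Eq.trans ?_ this
    simp only [LinearMap.comp_apply, LinearEquiv.coe_coe, AdicCompletion.of_ofLinearEquiv_symm]
    exact (evL_nat ϖ (X.d i (i + 1)).hom b).symm
  · intro i
    exact (AdicCompletion.ofLinearEquiv (Ideal.span {ϖ}) (X.X i)).symm.surjective.comp
      (evL_surj ϖ (M := X.X i))
  · intro i b h
    exact evL_ker ϖ (hX i) b (by simpa using h)
  · intro i c h
    exact th_inj ϖ (hX i) c h
end hat

end UD

namespace UD
open Limits DerivedCategory

section tf
variable {S : Type u} [CommRing S] (X : Ch S)

abbrev Afree : Type u := (Σ j : ℤ, X.X j) →₀ S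

noncomputable def epsl (i : ℤ) : Afree X →ₗ[S] X.X i :=
  open Classical in Finsupp.linearCombination S (fun s => if h : s.1 = i then h ▸ s.2 else 0)

lemma epsl_surj (i : ℤ) (x : X.X i) : ∃ a, epsl X i a = x :=
  ⟨Finsupp.single ⟨i, x⟩ 1, by simp [epsl]⟩

noncomputable def Td : (Afree X × Afree X) →ₗ[S] (Afree X × Afree X) :=
  LinearMap.inl S _ _ ∘ₗ LinearMap.snd S _ _

noncomputable def Tc : Ch S :=
  CochainComplex.of (fun _ => ModuleCat.of S (Afree X × Afree X)) (fun _ => ModuleCat.ofHom (Td X))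
    (fun i => by
      refine ModuleCat.hom_ext (LinearMap.ext fun x => ?_)
      rfl)

lemma Tc_d (i : ℤ) (x : Afree X × Afree X) : (Tc X).d i (i + 1) x = Td X x := by
  exact DFunLike.congr_fun (congr_arg ModuleCat.Hom.hom (CochainComplex.of_d
    (fun _ : ℤ => ModuleCat.of S (Afree X × Afree X)) (fun _ => ModuleCat.ofHom (Td X)) i)) x

lemma Tc_acyclic : (Tc X).Acyclic := by
  rw [acyclic_iff]
  intro i (x : Afree X × Afree X) hx
  rw [Tc_d] at hx
  have h : x.2 = 0 := congr_arg Prod.fst hx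
  refine ⟨(0, x.1), (Tc_d X i (0, x.1)).trans ?_⟩
  exact Prod.ext rfl h.symm

noncomputable def Tpi : Tc X ⟶ X :=
  mkHom (fun i => (((X.d (i - 1) i).hom ∘ₗ epsl X (i - 1)) ∘ₗ LinearMap.fst S _ _ +
    epsl X i ∘ₗ LinearMap.snd S _ _ : (Afree X × Afree X) →ₗ[S] X.X i))
    (fun i (x : Afree X × Afree X) => by
      rw [Tc_d]
      have key : ∀ j k : ℤ, j = i → X.d j k (epsl X j x.2) = X.d i k (epsl X i x.2) := by
        rintro j k rfl
        rfl
      change X.d _ _ (epsl X _ x.2) + epsl X (i + 1) 0 =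
        X.d i (i + 1) (X.d (i - 1) i (epsl X _ x.1) + epsl X i x.2)
      rw [map_zero, add_zero, map_add, dd, zero_add]
      exact key _ _ (by simp))

lemma Tpi_surj (i : ℤ) (x : X.X i) : ∃ y : (Tc X).X i, (Tpi X).f i y = x := by
  obtain ⟨a, ha⟩ := epsl_surj X i x
  refine ⟨((0 : Afree X), a), ?_⟩
  change X.d (i - 1) i (epsl X _ 0) + epsl X i a = x
  rw [ha]
  simp

lemma exists_tf (ϖ : S) (hS : ∀ x : S, ϖ * x = 0 → x = 0) : 
    ∃ s : ShortComplex (Ch S), s.ShortExact ∧ s.X₃ = X ∧ s.X₂.Acyclic ∧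
      ∀ i (x : s.X₁.X i), ϖ • x = 0 → x = 0 := by
  have he : Epi (Tpi X) := by
    have (i : ℤ) : Epi ((Tpi X).f i) := by
      rw [ModuleCat.epi_iff_surjective]
      exact Tpi_surj X i
    exact HomologicalComplex.epi_of_epi_f _ this
  have hs : (ShortComplex.mk (kernel.ι (Tpi X)) (Tpi X) (by simp)).ShortExact :=
    { exact := ShortComplex.exact_kernel _ }
  refine ⟨_, hs, rfl, Tc_acyclic X, ?_⟩
  intro i x hx
  apply ses_inj hs
  have h : ϖ • ((kernel.ι (Tpi X)).f i x) = 0 := by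
    refine (map_smul ((kernel.ι (Tpi X)).f i).hom ϖ x).symm.trans ?_
    rw [hx]
    exact map_zero _
  have A (a : Afree X) (ha : ϖ • a = 0) : a = 0 := by
    ext s
    exact hS _ (DFunLike.congr_fun ha s)
  generalize ((kernel.ι (Tpi X)).f i x) = y at h
  change y = 0
  change Afree X × Afree X at y
  exact Prod.ext (A _ (congr_arg Prod.fst h)) (A _ (congr_arg Prod.snd h))
end tf

section main
variable {R S : Type u} [CommRing R] [CommRing S] (f : R →+* S)

lemma res_ses (s : ShortComplex (Ch S)) (hs : s.ShortExact) : 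
    (s.map (res f)).ShortExact := by
  have h1 := ses_inj hs
  have h2 := ses_ex hs
  have h3 := ses_surj hs
  exact shortExact_of _ h1 h2 h3

lemma res_acyclic (X : Ch S) (hX : X.Acyclic) : ((res f).obj X).Acyclic := by
  rw [acyclic_iff] at hX ⊢
  exact hX

lemma Phi_good (ϖ : R) (J : ℕ → Ch R) (hH : IsGood (H J)) : IsGood ((Cf ϖ).op ⋙ H J) where
  ses s hs := by
    obtain ⟨w, h⟩ := C_ses ϖ s hs
    exact hH.ses _ h
  acyc X hX := hH.acyc _ (C_acyclic ϖ X hX)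

universe w
variable [HasDerivedCategory.{w} (ModuleCat.{u} R)] {P : DerivedCategory (ModuleCat.{u} R) → Prop}
  (hP : IsThick P) (J : ℕ → Ch R)

lemma p_H_res (hP : IsThick P) (h : ∀ K : Ch S, P (Q.obj ((res f).obj K))) (K : Ch S) :
    P (Q.obj ((H J).obj (.op ((res f).obj K)))) := by
  obtain ⟨K', ⟨e⟩⟩ := of_action f ((H J).obj (.op ((res f).obj K)))
    (fun a => (H J).map ((res f).map (a • 𝟙 K)).op) (by
      simp) (fun a b => by
      rw [← Functor.map_comp, ← op_comp, ← Functor.map_comp]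
      simp [smul_smul, mul_comm]) (fun a b => by
      rw [← H_add, add_smul]
      rfl) (fun r => by
      have : (res f).map (f r • 𝟙 K) = r • 𝟙 _ := rfl
      rw [this, H_smul]
      simp)
  exact hP.iso _ _ (Q.mapIso e) (h K')

lemma p_Phi_res (hP : IsThick P) (hH : IsGood (H J)) (ϖ : R) (ϖ' : S) (hϖ : f ϖ = ϖ')
    (hS : ∀ x : S, ϖ' * x = 0 → x = 0)
    (h : ∀ K : Ch (AdicCompletion (Ideal.span {ϖ'}) S), P (Q.obj ((res 
      ((algebraMap S (AdicCompletion (Ideal.span {ϖ'}) S)).comp f)).obj K))) (X : Ch S) :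
    P (Q.obj (((Cf ϖ).op ⋙ H J).obj (.op ((res f).obj X)))) := by
  obtain ⟨s, hs, rfl, ha, ht⟩ := exists_tf X ϖ' hS
  have hg := Phi_good ϖ J hH
  obtain ⟨φ, hφ⟩ := C_hat f ϖ ϖ' hϖ s.X₁ ht
  have q := hH.qis φ
  have h1 := (hP.qis ((H J).map φ.op)).1 (p_H_res _ J hP h _)
  obtain ⟨w, h2⟩ := hg.ses _ (res_ses f s hs)
  refine hP.ses₁ h2 ?_ h1
  exact hP.acyclic (hg.acyc _ (res_acyclic f _ ha)) h1

end main
end UD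

namespace UD
open Limits DerivedCategory

section prod
variable {R : Type u} [CommRing R]

noncomputable def piC (J : ℕ → Ch R) : Ch R where
  X i := ModuleCat.of R (∀ n, (J n).X i)
  d i j := ModuleCat.ofHom (LinearMap.pi fun n => ((J n).d i j).hom ∘ₗ LinearMap.proj n)
  shape i j h := by
    refine ModuleCat.hom_ext (LinearMap.ext fun z => funext fun n => ?_)
    change (J n).d i j (z n) = 0
    rw [(J n).shape i j h]
    rfl
  d_comp_d' i j k _ _ := by
    refine ModuleCat.hom_ext (LinearMap.ext fun z => funext fun n => ?_)
    exact dd (J n) i j k (z n)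

noncomputable def piMap {J L : ℕ → Ch R} (φ : ∀ n, J n ⟶ L n) : piC J ⟶ piC L :=
  mkHom (fun i => (LinearMap.pi fun n => ((φ n).f i).hom ∘ₗ LinearMap.proj n : 
      (∀ n, (J n).X i) →ₗ[R] (∀ n, (L n).X i)))
    (fun i x => funext fun n => comm_apply (φ n) _ _ _)

lemma piMap_ses (s : ℕ → ShortComplex (Ch R)) (hs : ∀ n, (s n).ShortExact) :
    ∃ w, (ShortComplex.mk (piMap fun n => (s n).f) (piMap fun n => (s n).g) w).ShortExact := by
  refine ⟨ch_hom_ext fun i (x : ∀ n, (s n).X₁.X i) => funext fun n => ses_zero i (x n),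
    shortExact_of _ ?_ ?_ ?_⟩
  · intro i (x : ∀ n, (s n).X₁.X i) hx
    exact funext fun n => ses_inj (hs n) i (x n) (congr_fun hx n)
  · intro i (x : ∀ n, (s n).X₂.X i) hx
    choose y hy using fun n => ses_ex (hs n) i (x n) (congr_fun hx n)
    exact ⟨y, funext hy⟩
  · intro i (x : ∀ n, (s n).X₃.X i)
    choose y hy using fun n => ses_surj (hs n) i (x n)
    exact ⟨y, funext hy⟩

lemma piC_acyclic (J : ℕ → Ch R) (h : ∀ n, (J n).Acyclic) : (piC J).Acyclic := by
  rw [acyclic_iff]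
  intro i (x : ∀ n, (J n).X (i + 1)) hx
  choose y hy using fun n => (acyclic_iff _).1 (h n) i (x n) (congr_fun hx n)
  exact ⟨y, funext hy⟩

lemma piMap_qis {J L : ℕ → Ch R} (φ : ∀ n, J n ⟶ L n) (h1 : ∀ n, Mono (φ n)) 
    (h2 : ∀ n, QuasiIso (φ n)) : QuasiIso (piMap φ) := by
  have := HasDerivedCategory.standard (ModuleCat.{u} R)
  let s (n : ℕ) : ShortComplex (Ch R) := ShortComplex.mk (φ n) (cokernel.π (φ n)) (by simp)
  have hs (n : ℕ) : (s n).ShortExact :=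
    { exact := ShortComplex.exact_cokernel (φ n)
      mono_f := h1 n
      epi_g := by dsimp [s]; infer_instance }
  obtain ⟨w, h⟩ := piMap_ses s hs
  exact ses_qis_f h (piC_acyclic _ fun n => (hs n).acyclic_X₃ (h2 n))

open CochainComplex HomComplex

noncomputable abbrev R0 (R : Type u) [CommRing R] : Ch R :=
  (CochainComplex.singleFunctor (ModuleCat.{u} R) 0).obj (ModuleCat.of R R)

noncomputable def R0iso (R : Type u) [CommRing R] : (R0 R).X 0 ≅ ModuleCat.of R R :=
  HomologicalComplex.singleObjXSelf (.up ℤ) 0 (ModuleCat.of R R)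

lemma R0_d (i : ℤ) : (R0 R).d 0 i = 0 := HomologicalComplex.single_obj_d _ _ _ _ _

noncomputable def HtoPi (J : ℕ → Ch R) : Hobj J (R0 R) ⟶ piC J :=
  mkHom (fun p => (
    { toFun := fun z n => (z n).v 0 p (zero_add p) ((R0iso R).inv.hom (1 : R))
      map_add' := fun z w => rfl
      map_smul' := fun r z => rfl } : (∀ n, Cochain (R0 R) (J n) p) →ₗ[R] ∀ n, (J n).X p))
    (fun p (z : ∀ n, Cochain (R0 R) (J n) p) => funext fun n => by
      change (δ p (p + 1) (z n)).v 0 (p + 1) (zero_add _) _ = (J n).d p (p + 1) _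
      rw [δ_v p (p + 1) rfl (z n) 0 (p + 1) (zero_add _) p 1 (by simp) (by simp)]
      rw [R0_d, zero_comp, smul_zero, add_zero]
      rfl)

lemma HtoPi_qis (J : ℕ → Ch R) : QuasiIso (HtoPi J) := by
  refine quasiIso_of_surj _ ?_ ?_
  · intro p (y : ∀ n, (J n).X p)
    let g (n : ℕ) : ModuleCat.of R R ⟶ (J n).X p := ModuleCat.ofHom (LinearMap.toSpanSingleton R _ (y n))
    refine ⟨fun n => Cochain.fromSingleMk (g n) (zero_add p), funext fun n => ?_⟩
    change (Cochain.fromSingleMk (g n) (zero_add p)).v 0 p (zero_add p) ((R0iso R).inv.hom (1 : R)) = y n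
    rw [Cochain.fromSingleMk_v]
    change g n ((R0iso R).hom ((R0iso R).inv (1 : R))) = y n
    simp [g]
  · intro p (z : ∀ n, Cochain (R0 R) (J n) (p + 1)) hz _
    refine ⟨0, map_zero _, ?_⟩
    rw [map_zero]
    symm
    funext n
    obtain ⟨g, hg⟩ := Cochain.fromSingleMk_surjective (z n) _ (zero_add (p + 1))
    have h : (z n).v 0 (p + 1) (zero_add _) ((R0iso R).inv.hom (1 : R)) = 0 := congr_fun hz n
    rw [← hg, Cochain.fromSingleMk_v] at h
    change g ((R0iso R).hom ((R0iso R).inv (1 : R))) = 0 at h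
    have h' : g (1 : R) = 0 := by simpa using h
    have : g = 0 := by
      refine ModuleCat.hom_ext (LinearMap.ext_ring ?_)
      exact h'
    rw [← hg, this, Cochain.fromSingleMk_zero]
    rfl

lemma R0_cases (i : ℤ) : Nonempty (R ≃ₗ[R] (R0 R).X i) ∨ Subsingleton ((R0 R).X i) := by
  by_cases h : i = 0
  · subst h
    exact Or.inl ⟨(R0iso R).symm.toLinearEquiv⟩
  · right
    apply ModuleCat.subsingleton_of_isZero
    exact HomologicalComplex.isZero_single_obj_X _ _ _ _ h

lemma C_R0 (ϖ : R) (hϖ : ∀ x : R, ϖ * x = 0 → x = 0) (hc : IsAdicComplete (Ideal.span {ϖ}) R) :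
    ∃ φ : Cobj ϖ (R0 R) ⟶ R0 R, QuasiIso φ := by
  refine C_complete ϖ _ ?_ ?_
  · intro i x hx
    rcases R0_cases (R := R) i with ⟨⟨e⟩⟩ | h
    · apply e.symm.injective
      rw [map_zero]
      apply hϖ
      rw [← smul_eq_mul, ← map_smul, hx, map_zero]
    · exact Subsingleton.elim _ _
  · intro i
    rcases R0_cases (R := R) i with ⟨⟨e⟩⟩ | h
    · exact complete_of_equiv _ e hc
    · infer_instance
end prod

section trunc
variable {R : Type u} [CommRing R] (M : Ch R)

noncomputable def Bn (n : ℕ) (i : ℤ) : Submodule R (M.X i) :=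
  if i < -n then ⊤ else if i = -n then LinearMap.range (M.d (i - 1) i).hom else ⊥

lemma Bn_lt {n : ℕ} {i : ℤ} (h : i < -n) : Bn M n i = ⊤ := if_pos h
lemma Bn_eq {n : ℕ} {i : ℤ} (h : i = -n) : Bn M n i = LinearMap.range (M.d (i - 1) i).hom := by
  rw [Bn, if_neg (by omega), if_pos h]
lemma Bn_gt {n : ℕ} {i : ℤ} (h : -n < i) : Bn M n i = ⊥ := by
  rw [Bn, if_neg (by omega), if_neg (by omega)]

lemma Bn_d (n : ℕ) (i j : ℤ) : Bn M n i ≤ (Bn M n j).comap (M.d i j).hom := by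
  by_cases hij : i + 1 = j
  · subst hij
    intro x hx
    rw [Submodule.mem_comap]
    rcases lt_trichotomy i (-n) with h | h | h
    · rcases lt_or_eq_of_le (show i + 1 ≤ - n by omega) with h' | h'
      · rw [Bn_lt M h']
        trivial
      · rw [Bn_eq M h']
        have : ∀ j : ℤ, j = i → (M.d i (i + 1)).hom x ∈ LinearMap.range (M.d j (i + 1)).hom := by
          rintro j rfl
          exact ⟨x, rfl⟩
        exact this _ (by simp)
    · rw [Bn_eq M h] at hx
      obtain ⟨y, rfl⟩ := hx
      have : (M.d i (i + 1)).hom ((M.d (i - 1) i).hom y) = 0 := dd M _ _ _ y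
      rw [this]
      exact zero_mem _
    · rw [Bn_gt M h, Submodule.mem_bot] at hx
      rw [hx, map_zero]
      exact zero_mem _
  · have : M.d i j = 0 := M.shape i j hij
    intro x _
    rw [Submodule.mem_comap, this]
    exact zero_mem _

lemma Bn_succ (n : ℕ) (i : ℤ) : Bn M (n + 1) i ≤ Bn M n i := by
  rcases lt_or_ge i (-n) with h | h
  · rw [Bn_lt M h]; exact le_top
  · rw [Bn_gt M (n := n + 1) (by push_cast; omega)]; exact bot_le

lemma Bn_anti (i : ℤ) : Antitone (fun n => Bn M n i) := antitone_nat_of_succ_le (fun n => Bn_succ M n i)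

noncomputable def Mn (n : ℕ) : Ch R where
  X i := ModuleCat.of R (M.X i ⧸ Bn M n i)
  d i j := ModuleCat.ofHom (Submodule.mapQ _ _ (M.d i j).hom (Bn_d M n i j))
  shape i j h := by
    refine ModuleCat.hom_ext (Submodule.linearMap_qext _ (LinearMap.ext fun x => ?_))
    change Submodule.Quotient.mk (M.d i j x) = 0
    rw [M.shape i j h]
    rfl
  d_comp_d' i j k _ _ := by
    refine ModuleCat.hom_ext (Submodule.linearMap_qext _ (LinearMap.ext fun x => ?_))
    change Submodule.Quotient.mk (M.d j k (M.d i j x)) = 0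
    rw [dd]
    rfl

instance Mn_ge (n : ℕ) : (Mn M n).IsStrictlyGE (-n) := by
  rw [CochainComplex.isStrictlyGE_iff]
  intro i hi
  have : Subsingleton (M.X i ⧸ Bn M n i) := by
    rw [Bn_lt M hi]
    infer_instance
  exact ModuleCat.isZero_of_subsingleton (ModuleCat.of R (M.X i ⧸ Bn M n i))

noncomputable def Mal : M ⟶ piC (Mn M) :=
  mkHom (fun i => (LinearMap.pi fun n => (Bn M n i).mkQ : M.X i →ₗ[R] ∀ n, M.X i ⧸ Bn M n i))
    (fun i x => rfl)

noncomputable def MbeL (i : ℤ) : (∀ n, M.X i ⧸ Bn M n i) →ₗ[R] ∀ n, M.X i ⧸ Bn M n i :=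
  LinearMap.pi fun n => LinearMap.proj (R := R) (φ := fun n => M.X i ⧸ Bn M n i) n -
      Submodule.factor (Bn_succ M n i) ∘ₗ
        LinearMap.proj (R := R) (φ := fun n => M.X i ⧸ Bn M n i) (n + 1)

noncomputable def Mbe : piC (Mn M) ⟶ piC (Mn M) :=
  mkHom (MbeL M)
    (fun i (x : ∀ n, M.X i ⧸ Bn M n i) => by
      choose y hy using fun n => Submodule.Quotient.mk_surjective _ (x n)
      obtain rfl : (fun n => Submodule.Quotient.mk (y n)) = x := funext hy
      funext n
      change (Submodule.Quotient.mk (M.d i (i + 1) (y n)) : M.X (i + 1) ⧸ Bn M n (i + 1)) - 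
        Submodule.Quotient.mk (M.d i (i + 1) (y (n + 1))) = 
        Submodule.Quotient.mk (M.d i (i + 1) (y n - y (n + 1)))
      rw [map_sub]
      rfl)

lemma Mbe_apply (i : ℤ) (y : ℕ → M.X i) (n : ℕ) :
    ((Mbe M).f i (fun n => Submodule.Quotient.mk (y n) : ∀ n, M.X i ⧸ Bn M n i) : 
      ∀ n, M.X i ⧸ Bn M n i) n = Submodule.Quotient.mk (y n - y (n + 1)) := rfl

lemma M_ses : ∃ w, (ShortComplex.mk (Mal M) (Mbe M) w).ShortExact := by
  have w : Mal M ≫ Mbe M = 0 := by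
    refine ch_hom_ext fun i x => funext fun n => ?_
    refine (Mbe_apply M i (fun _ => x) n).trans ?_
    rw [sub_self]
    rfl
  refine ⟨w, shortExact_of _ ?_ ?_ ?_⟩
  · intro i x hx
    have h : (Submodule.Quotient.mk x : M.X i ⧸ Bn M (i.natAbs + 1) i) = 0 := congr_fun hx _
    rw [Submodule.Quotient.mk_eq_zero, Bn_gt M (by omega)] at h
    exact h
  · intro i (x : ∀ n, M.X i ⧸ Bn M n i) hx
    choose y hy using fun n => Submodule.Quotient.mk_surjective _ (x n)
    obtain rfl : (fun n => Submodule.Quotient.mk (y n)) = x := funext hy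
    have h1 (n : ℕ) : y n - y (n + 1) ∈ Bn M n i := by
      rw [← Submodule.Quotient.mk_eq_zero]
      exact congr_fun hx n
    have h2 (n m : ℕ) (hnm : n ≤ m) : y n - y m ∈ Bn M n i := by
      induction m, hnm using Nat.le_induction with
      | base => simp
      | succ m hm ih =>
        have := add_mem ih (Bn_anti M i hm (h1 m))
        simpa using this
    refine ⟨y (i.natAbs + 1), funext fun n => ?_⟩
    change (Submodule.Quotient.mk (y (i.natAbs + 1)) : M.X i ⧸ Bn M n i) = Submodule.Quotient.mk (y n)
    rcases le_total n (i.natAbs + 1) with h | h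
    · symm
      rw [Submodule.Quotient.eq]
      exact h2 _ _ h
    · have := h2 _ _ h
      rw [Bn_gt M (by omega), Submodule.mem_bot, sub_eq_zero] at this
      rw [this]
  · intro i (x : ∀ n, M.X i ⧸ Bn M n i)
    choose y hy using fun n => Submodule.Quotient.mk_surjective _ (x n)
    refine ⟨(fun n => Submodule.Quotient.mk (- ∑ k ∈ Finset.range n, y k) : 
      ∀ n, M.X i ⧸ Bn M n i), funext fun n => ?_⟩
    refine (Mbe_apply M i _ n).trans ?_
    rw [← hy n, Finset.sum_range_succ]
    congr 1
    abel

end trunc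
end UD

namespace UD
open Limits DerivedCategory

lemma exists_resolution {R : Type u} [CommRing R] (M : Ch R) : ∃ (J : ℕ → Ch R) (φ : ∀ n, Mn M n ⟶ J n),
    (∀ n, Mono (φ n)) ∧ (∀ n, QuasiIso (φ n)) ∧ (∀ n i, Injective ((J n).X i)) ∧
      ∀ n, (J n).IsKInjective := by
  have h (n : ℕ) : ∃ (L : Ch R) (i : Mn M n ⟶ L), Mono i ∧ QuasiIso i ∧
      (∀ j, Injective (L.X j)) ∧ L.IsKInjective := by
    obtain ⟨L, i, h1, h2, h3, h4⟩ :=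
      CochainComplex.Plus.modelCategoryQuillen.exists_mono_quasiIso_injective
        (Mn M n) (-n - 1) (-n) (by omega)
    exact ⟨L, i, h1, h2, h3, CochainComplex.isKInjective_of_injective L (-n - 1)⟩
  choose J φ h1 h2 h3 h4 using h
  exact ⟨J, φ, h1, h2, h3, h4⟩

theorem descent_hat {R S : Type u} [CommRing R] [CommRing S] (f : R →+* S) (ϖ : R) (ϖ' : S)
    (hf : f ϖ = ϖ') (hR : ∀ x : R, ϖ * x = 0 → x = 0) (hS : ∀ x : S, ϖ' * x = 0 → x = 0)
    (hc : IsAdicComplete (Ideal.span {ϖ}) R) (hd : IsUniversalDescent f) :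
    IsUniversalDescent ((algebraMap S (AdicCompletion (Ideal.span {ϖ'}) S)).comp f) := by
  letI := HasDerivedCategory.standard (ModuleCat.{u} R)
  intro P p1 p2 p3 p4 p5 p6
  have hP : IsThick P := ⟨p1, p2, p3, p4, p5⟩
  suffices h : ∀ M : Ch R, P (Q.obj M) from
    fun X => p1 _ _ (Q.objObjPreimageIso X) (h (Q.objPreimage X))
  intro M
  obtain ⟨J, φ, h1, h2, h3, h4⟩ := exists_resolution M
  have hH := H_good J h3 h4
  have hΦ := Phi_good ϖ J hH
  have hT := pull_thick hP hΦ
  have key : pull P hΦ (Q.obj (R0 R)) :=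
    hd (pull P hΦ) hT.iso hT.shift hT.shift' hT.tri hT.retract (fun K =>
      (pull_iff hP hΦ _).2 (p_Phi_res f J hP hH ϖ ϖ' hf hS p6 K)) _
  have k1 : P (Q.obj ((H J).obj (.op (Cobj ϖ (R0 R))))) := (pull_iff hP hΦ _).1 key
  obtain ⟨ψ, hψ⟩ := C_R0 ϖ hR hc
  have := hH.qis ψ
  have k2 : P (Q.obj ((H J).obj (.op (R0 R)))) := (hP.qis ((H J).map ψ.op)).2 k1
  have := HtoPi_qis J
  have k3 : P (Q.obj (piC J)) := (hP.qis (HtoPi J)).1 k2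
  have := piMap_qis φ h1 h2
  have k4 : P (Q.obj (piC (Mn M))) := (hP.qis (piMap φ)).2 k3
  obtain ⟨w, hw⟩ := M_ses M
  exact hP.ses₁ hw k4 k4

theorem descent_of_comp {R S T : Type u} [CommRing R] [CommRing S] [CommRing T] (f : R →+* S)
    (g : S →+* T) (hd : IsUniversalDescent (g.comp f)) : IsUniversalDescent f := by
  letI := HasDerivedCategory.standard (ModuleCat.{u} R)
  intro P p1 p2 p3 p4 p5 p6
  exact hd P p1 p2 p3 p4 p5 (fun K => p6 ((res g).obj K))

end UD

/-- Lemma 6.13(1): let `K` be a complete nonarchimedean field with ring of integers `O_K` and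
`π ∈ O_K` a nonzero nonunit. For a map `R → S` of `π`-torsion-free `O_K`-algebras with `R`
`π`-adically complete, `R → S` is a universal descent morphism iff `R → Ŝ` is, where `Ŝ` is
the `π`-adic completion of `S`. -/
theorem stmt17 {K : Type u} [NontriviallyNormedField K] [IsUltrametricDist K]
    [CompleteSpace K] (π : ringOfIntegers K) (hπ0 : π ≠ 0) (hπu : ¬IsUnit π)
    {R S : Type u} [CommRing R] [CommRing S]
    [Algebra (ringOfIntegers K) R] [Algebra (ringOfIntegers K) S]
    (f : R →ₐ[ringOfIntegers K] S)
    (hRtf : ∀ x : R, algebraMap (ringOfIntegers K) R π * x = 0 → x = 0)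
    (hStf : ∀ x : S, algebraMap (ringOfIntegers K) S π * x = 0 → x = 0)
    (hRc : IsAdicComplete (Ideal.span {algebraMap (ringOfIntegers K) R π}) R) :
    IsUniversalDescent f.toRingHom ↔
      IsUniversalDescent
        ((algebraMap S
            (AdicCompletion (Ideal.span {algebraMap (ringOfIntegers K) S π}) S)).comp
          f.toRingHom) := by
  exact ⟨UD.descent_hat f.toRingHom _ _ (f.commutes π) hRtf hStf hRc,
    UD.descent_of_comp f.toRingHom _⟩
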